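/- Let m ≥ 1 be a real number, let k : [0,∞) → (0,∞) be continuous, nondecreasing, with k(r) → +∞ as r → +∞, and let g ∈ C²([0,∞)) solve g''(r) = k(r)² g(r), g(0) = 0, g'(0) = 1. Then liminf_{r→∞} ( k(r) ∫₀^r g(t)^m dt ) / g(r)^m ≥ 1/m. -/

import Mathlib

open Set Filter MeasureTheory intervalIntegral

/-!
Put `F r = k r * (∫₀^r g^m) / g r ^ m`.

For the lower bound, freeze `r`: since `k` is nondecreasing, `k(r)² g² - g'²` is nondecreasing up
to `r`, so `g' ≤ k g + O(1)`. As `k g → ∞`, this gives `θ g' ≤ k g` eventually, for every `θ < 1`.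
With `θ = c m`, `c < 1 / m`, it says that `k(r) ∫₀^t g^m - c g(t)^m` is nondecreasing in `t ≤ r` for
large `t`, so that `F` is eventually at least any number below `c`.

The real-valued `liminf` of a function tending to `+∞` has the junk value `0`, so it must also be
shown that `F` does not tend to `+∞`. The functions `w = g' / g` and `v = g^m / ∫₀^r g^m` satisfy
`w' = k² - w²` and `v' = v (m w - v)`. If `F = k / v` stayed above `3 / m`, then `y = w v^(2/m)`
would satisfy `y' ≥ c y^(1 + s)` with `c, s > 0`, and hence blow up in finite time; the exponent
`2 / m` turns the term `-w` of `w' / w` into `+w` in `y' / y = k² / w + w - (2 / m) v`.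
-/

lemma monotoneOn_of_forall_hasDerivWithinAt_nonneg {f f' : ℝ → ℝ} {D : Set ℝ} (hD : Convex ℝ D)
    (hf : ∀ t ∈ D, HasDerivWithinAt f (f' t) D t) (hf' : ∀ t ∈ D, 0 ≤ f' t) : MonotoneOn f D :=
  monotoneOn_of_hasDerivWithinAt_nonneg hD (fun t ht => (hf t ht).continuousWithinAt)
    (fun t ht => (hf t (interior_subset ht)).mono interior_subset)
    (fun t ht => hf' t (interior_subset ht))

lemma hasDerivAt_integral_of_continuousOn_Ici {f : ℝ → ℝ} {a r : ℝ} (hf : ContinuousOn f (Ici a))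
    (hr : a < r) : HasDerivAt (fun u => ∫ t in a..u, f t) (f r) r :=
  integral_hasDerivAt_right ((hf.mono Icc_subset_Ici_self).intervalIntegrable_of_Icc hr.le)
    ((hf.mono Ioi_subset_Ici_self).stronglyMeasurableAtFilter isOpen_Ioi r hr)
    (hf.continuousAt (Ici_mem_nhds hr))

lemma exists_deriv_lt_mul_rpow_one_add {y y' : ℝ → ℝ} {a c s : ℝ} (hc : 0 < c) (hs : 0 < s)
    (hy : ∀ t ∈ Ici a, HasDerivWithinAt y (y' t) (Ici a) t) (hpos : ∀ t ∈ Ici a, 0 < y t) :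
    ∃ t ∈ Ici a, y' t < c * y t ^ (1 + s) := by
  by_contra! hge
  have hmono : MonotoneOn (fun t => -y t ^ (-s) - s * c * t) (Ici a) := by
    refine monotoneOn_of_forall_hasDerivWithinAt_nonneg (convex_Ici a)
      (fun t ht => ((hy t ht).rpow_const (Or.inl (hpos t ht).ne')).neg.sub
        ((hasDerivWithinAt_id t _).const_mul (s * c))) fun t ht => ?_
    have hcancel : y t ^ (1 + s) * y t ^ (-s - 1) = 1 := by
      rw [← Real.rpow_add (hpos t ht), show 1 + s + (-s - 1) = 0 by ring, Real.rpow_zero]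
    have hc_le : c ≤ y' t * y t ^ (-s - 1) := by
      calc c = c * y t ^ (1 + s) * y t ^ (-s - 1) := by rw [mul_assoc, hcancel, mul_one]
        _ ≤ y' t * y t ^ (-s - 1) :=
          mul_le_mul_of_nonneg_right (hge t ht) (Real.rpow_nonneg (hpos t ht).le _)
    nlinarith [mul_le_mul_of_nonneg_left hc_le hs.le]
  set T := a + y a ^ (-s) / (s * c) with hT
  have haT : a ≤ T := le_add_of_nonneg_right
    (div_nonneg (Real.rpow_nonneg (hpos a self_mem_Ici).le _) (by positivity))
  have hscT : s * c * T = s * c * a + y a ^ (-s) := by rw [hT]; field_simp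
  have hle : -y a ^ (-s) - s * c * a ≤ -y T ^ (-s) - s * c * T := hmono self_mem_Ici haT haT
  linarith [Real.rpow_pos_of_pos (hpos T haT) (-s)]

lemma mul_rpow_rpow_le_add_div {w v p : ℝ} (hw : 0 ≤ w) (hv : 0 ≤ v) (hp : 0 ≤ p) :
    (w * v ^ p) ^ (1 / (1 + p)) ≤ (w + p * v) / (1 + p) := by
  calc (w * v ^ p) ^ (1 / (1 + p)) = w ^ (1 / (1 + p)) * v ^ (p / (1 + p)) := by
        rw [Real.mul_rpow hw (Real.rpow_nonneg hv p), ← Real.rpow_mul hv, mul_one_div]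
    _ ≤ 1 / (1 + p) * w + p / (1 + p) * v :=
        Real.geom_mean_le_arith_mean2_weighted (by positivity) (by positivity) hw hv (by field_simp)
    _ = (w + p * v) / (1 + p) := by ring

lemma add_div_two_le_sq_div_add_sub {w u κ : ℝ} (hw : 0 < w) (hu : 0 ≤ u) (hκ : 3 / 2 * u ≤ κ) :
    (w + u) / 2 ≤ κ ^ 2 / w + w - u := by
  have hsq : 3 / 2 * u - w / 2 ≤ (3 / 2 * u) ^ 2 / w := by
    rw [le_div_iff₀ hw]
    nlinarith [sq_nonneg (3 / 2 * u - w / 2)]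
  have hdiv : (3 / 2 * u) ^ 2 / w ≤ κ ^ 2 / w := by gcongr
  linarith

lemma exists_le_mul_of_riccati_system {k w v : ℝ → ℝ} {a m : ℝ} (hm : 0 < m)
    (hw : ∀ t ∈ Ici a, HasDerivWithinAt w (k t ^ 2 - w t ^ 2) (Ici a) t)
    (hv : ∀ t ∈ Ici a, HasDerivWithinAt v (v t * (m * w t - v t)) (Ici a) t)
    (hw_pos : ∀ t ∈ Ici a, 0 < w t) (hv_pos : ∀ t ∈ Ici a, 0 < v t) :
    ∃ t ∈ Ici a, k t ≤ 3 / m * v t := by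
  set p := 2 / m with hp
  have hp0 : 0 < p := by positivity
  have hpm : p * m = 2 := div_mul_cancel₀ 2 hm.ne'
  set y : ℝ → ℝ := fun t => w t * v t ^ p
  have hy_pos : ∀ t ∈ Ici a, 0 < y t := fun t ht =>
    mul_pos (hw_pos t ht) (Real.rpow_pos_of_pos (hv_pos t ht) p)
  have hy : ∀ t ∈ Ici a, HasDerivWithinAt y
      (y t * (k t ^ 2 / w t + w t - p * v t)) (Ici a) t := by
    intro t ht
    have hw0 := hw_pos t ht
    have hv0 := hv_pos t ht
    refine ((hw t ht).mul ((hv t ht).rpow_const (p := p) (Or.inl hv0.ne'))).congr_deriv ?_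
    rw [Real.rpow_sub_one hv0.ne']
    simp only [y]
    field_simp
    linear_combination w t ^ 2 * hpm
  obtain ⟨t, ht, hlt⟩ := exists_deriv_lt_mul_rpow_one_add (c := (1 + p) / 2) (s := 1 / (1 + p))
    (by positivity) (by positivity) hy hy_pos
  refine ⟨t, ht, ?_⟩
  by_contra! hk
  have hkp : 3 / 2 * (p * v t) ≤ k t := by
    calc 3 / 2 * (p * v t) = 3 / m * v t := by rw [hp]; ring
      _ ≤ k t := hk.le
  refine hlt.not_ge ?_
  calc (1 + p) / 2 * y t ^ (1 + 1 / (1 + p))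
      = y t * ((1 + p) / 2 * y t ^ (1 / (1 + p))) := by
        rw [Real.rpow_add (hy_pos t ht), Real.rpow_one]
        ring
    _ ≤ y t * ((1 + p) / 2 * ((w t + p * v t) / (1 + p))) := by
        have hy0 := (hy_pos t ht).le
        gcongr
        exact mul_rpow_rpow_le_add_div (hw_pos t ht).le (hv_pos t ht).le hp0.le
    _ = y t * ((w t + p * v t) / 2) := by field_simp
    _ ≤ y t * (k t ^ 2 / w t + w t - p * v t) :=
        mul_le_mul_of_nonneg_left (add_div_two_le_sq_div_add_sub (hw_pos t ht)
          (mul_pos hp0 (hv_pos t ht)).le hkp) (hy_pos t ht).le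

lemma mul_rpow_sub_rpow_le_mul_sub {g g' I : ℝ → ℝ} {c m κ R r : ℝ} (hRr : R ≤ r)
    (hg : ∀ t ∈ Icc R r, HasDerivWithinAt g (g' t) (Icc R r) t)
    (hI : ∀ t ∈ Icc R r, HasDerivWithinAt I (g t ^ m) (Icc R r) t)
    (hpos : ∀ t ∈ Icc R r, 0 < g t) (hle : ∀ t ∈ Icc R r, c * m * g' t ≤ κ * g t) :
    c * (g r ^ m - g R ^ m) ≤ κ * (I r - I R) := by
  have hmono : MonotoneOn (fun t => κ * I t - c * g t ^ m) (Icc R r) := by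
    refine monotoneOn_of_forall_hasDerivWithinAt_nonneg (convex_Icc R r)
      (fun t ht => ((hI t ht).const_mul κ).sub
        (((hg t ht).rpow_const (Or.inl (hpos t ht).ne')).const_mul c)) fun t ht => ?_
    have hsplit : g t ^ m = g t ^ (m - 1) * g t := by
      rw [Real.rpow_sub_one (hpos t ht).ne', div_mul_cancel₀ _ (hpos t ht).ne']
    rw [hsplit]
    linarith [mul_le_mul_of_nonneg_left (hle t ht) (Real.rpow_nonneg (hpos t ht).le (m - 1))]
  have hends : κ * I R - c * g R ^ m ≤ κ * I r - c * g r ^ m :=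
    hmono (left_mem_Icc.2 hRr) (right_mem_Icc.2 hRr) hRr
  linarith

/-- `g` solves `g'' = k² g` on `[a, ∞)`, with derivative `g'` and initial data `g a ≥ 0`,
`g' a > 0`. The derivatives at `a` are one-sided. -/
structure IsGrowingSolution (k g g' : ℝ → ℝ) (a : ℝ) : Prop where
  hasDerivWithinAt : ∀ r ∈ Ici a, HasDerivWithinAt g (g' r) (Ici a) r
  hasDerivWithinAt_deriv : ∀ r ∈ Ici a, HasDerivWithinAt g' (k r ^ 2 * g r) (Ici a) r
  nonneg_left : 0 ≤ g a
  deriv_pos_left : 0 < g' a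

namespace IsGrowingSolution

variable {k g g' I : ℝ → ℝ} {a b c m r θ : ℝ}

lemma continuousOn (h : IsGrowingSolution k g g' a) : ContinuousOn g (Ici a) :=
  fun r hr => (h.hasDerivWithinAt r hr).continuousWithinAt

lemma monotoneOn_mul_self (h : IsGrowingSolution k g g' a) :
    MonotoneOn (fun t => g t * g t) (Ici a) := by
  have hmul : MonotoneOn (fun t => g t * g' t) (Ici a) :=
    monotoneOn_of_forall_hasDerivWithinAt_nonneg (convex_Ici a)
      (fun t ht => (h.hasDerivWithinAt t ht).mul (h.hasDerivWithinAt_deriv t ht))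
      fun t _ => by nlinarith [sq_nonneg (g' t), sq_nonneg (k t * g t)]
  refine monotoneOn_of_forall_hasDerivWithinAt_nonneg (convex_Ici a)
    (fun t ht => (h.hasDerivWithinAt t ht).mul (h.hasDerivWithinAt t ht)) fun t ht => ?_
  have hleft : 0 ≤ g a * g' a := mul_nonneg h.nonneg_left h.deriv_pos_left.le
  have hright : g a * g' a ≤ g t * g' t := hmul self_mem_Ici ht ht
  linarith

lemma exists_mem_Ioo_pos (h : IsGrowingSolution k g g' a) (hr : a < r) :
    ∃ s ∈ Ioo a r, 0 < g s := by
  have hslope := hasDerivWithinAt_iff_tendsto_slope.1 (h.hasDerivWithinAt a self_mem_Ici)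
  rw [Ici_sdiff_left] at hslope
  obtain ⟨s, hs_slope, hs⟩ :=
    ((hslope.eventually (lt_mem_nhds h.deriv_pos_left)).and (Ioo_mem_nhdsGT hr)).exists
  rw [slope_def_field, div_pos_iff_of_pos_right (sub_pos.2 hs.1), sub_pos] at hs_slope
  exact ⟨s, hs, h.nonneg_left.trans_lt hs_slope⟩

lemma pos (h : IsGrowingSolution k g g' a) (hr : a < r) : 0 < g r := by
  obtain ⟨s, ⟨has, hsr⟩, hs⟩ := h.exists_mem_Ioo_pos hr
  by_contra! hgr
  obtain ⟨t, ⟨hst, -⟩, ht0⟩ : (0 : ℝ) ∈ g '' Icc s r :=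
    intermediate_value_Icc' hsr.le
      (h.continuousOn.mono (Icc_subset_Ici_self.trans (Ici_subset_Ici.2 has.le))) ⟨hgr, hs.le⟩
  have hsq : g s * g s ≤ g t * g t := h.monotoneOn_mul_self has.le (has.le.trans hst) hst
  rw [ht0] at hsq
  nlinarith

lemma nonneg (h : IsGrowingSolution k g g' a) (hr : a ≤ r) : 0 ≤ g r :=
  hr.eq_or_lt.elim (fun har => har ▸ h.nonneg_left) fun har => (h.pos har).le

lemma deriv_left_le (h : IsGrowingSolution k g g' a) (hr : a ≤ r) : g' a ≤ g' r :=
  monotoneOn_of_forall_hasDerivWithinAt_nonneg (convex_Ici a) h.hasDerivWithinAt_deriv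
    (fun _ ht => mul_nonneg (sq_nonneg _) (h.nonneg ht)) self_mem_Ici hr hr

lemma deriv_pos (h : IsGrowingSolution k g g' a) (hr : a ≤ r) : 0 < g' r :=
  h.deriv_pos_left.trans_le (h.deriv_left_le hr)

lemma mono (h : IsGrowingSolution k g g' a) (hab : a ≤ b) : IsGrowingSolution k g g' b where
  hasDerivWithinAt r hr :=
    (h.hasDerivWithinAt r (hab.trans hr)).mono (Ici_subset_Ici.2 hab)
  hasDerivWithinAt_deriv r hr :=
    (h.hasDerivWithinAt_deriv r (hab.trans hr)).mono (Ici_subset_Ici.2 hab)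
  nonneg_left := h.nonneg hab
  deriv_pos_left := h.deriv_pos hab

lemma tendsto_atTop (h : IsGrowingSolution k g g' a) : Tendsto g atTop atTop := by
  have hmono : MonotoneOn (fun t => g t - g' a * t) (Ici a) :=
    monotoneOn_of_forall_hasDerivWithinAt_nonneg (convex_Ici a)
      (fun t ht => (h.hasDerivWithinAt t ht).sub ((hasDerivWithinAt_id t _).const_mul (g' a)))
      fun t ht => by linarith [h.deriv_left_le ht]
  refine tendsto_atTop_mono' atTop ?_ (tendsto_atTop_add_const_left atTop (g a - g' a * a)
    (tendsto_id.const_mul_atTop h.deriv_pos_left))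
  filter_upwards [eventually_ge_atTop a] with r hr
  have hline : g a - g' a * a ≤ g r - g' a * r := hmono self_mem_Ici hr hr
  simp only [id_eq]
  linarith

lemma deriv_le_mul_add (h : IsGrowingSolution k g g' a) (hk : MonotoneOn k (Ici a))
    (hka : 0 ≤ k a) (hr : a ≤ r) : g' r ≤ k r * g r + g' a := by
  have hkr : 0 ≤ k r := hka.trans (hk self_mem_Ici hr hr)
  have henergy : MonotoneOn (fun t => k r ^ 2 * (g t * g t) - g' t * g' t) (Icc a r) := by
    have hg : ∀ t ∈ Icc a r, HasDerivWithinAt g (g' t) (Icc a r) t := fun t ht =>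
      (h.hasDerivWithinAt t ht.1).mono Icc_subset_Ici_self
    have hg' : ∀ t ∈ Icc a r, HasDerivWithinAt g' (k t ^ 2 * g t) (Icc a r) t := fun t ht =>
      (h.hasDerivWithinAt_deriv t ht.1).mono Icc_subset_Ici_self
    refine monotoneOn_of_forall_hasDerivWithinAt_nonneg (convex_Icc a r)
      (fun t ht => (((hg t ht).mul (hg t ht)).const_mul _).sub ((hg' t ht).mul (hg' t ht)))
      fun t ht => ?_
    have hkt : k t ^ 2 ≤ k r ^ 2 :=
      pow_le_pow_left₀ (hka.trans (hk self_mem_Ici ht.1 ht.1)) (hk ht.1 hr ht.2) 2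
    have hgg' : 0 ≤ g t * g' t := mul_nonneg (h.nonneg ht.1) (h.deriv_pos ht.1).le
    linarith [mul_le_mul_of_nonneg_right hkt hgg']
  have hends : k r ^ 2 * (g a * g a) - g' a * g' a ≤ k r ^ 2 * (g r * g r) - g' r * g' r :=
    henergy (left_mem_Icc.2 hr) (right_mem_Icc.2 hr) hr
  have hkg : 0 ≤ k r * g r := mul_nonneg hkr (h.nonneg hr)
  refine (abs_le_of_sq_le_sq' ?_ (add_nonneg hkg h.deriv_pos_left.le)).2
  nlinarith [mul_nonneg hkg h.deriv_pos_left.le, sq_nonneg (k r * g a)]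

lemma eventually_mul_deriv_le (h : IsGrowingSolution k g g' a) (hk : MonotoneOn k (Ici b))
    (hk_top : Tendsto k atTop atTop) (hθ : θ < 1) : ∀ᶠ r in atTop, θ * g' r ≤ k r * g r := by
  obtain ⟨R, haR, hbR, hkR⟩ := ((eventually_ge_atTop a).and
    ((eventually_ge_atTop b).and (hk_top.eventually_ge_atTop 0))).exists
  have hR := h.mono haR
  filter_upwards [eventually_ge_atTop R,
    (hk_top.atTop_mul_atTop₀ h.tendsto_atTop).eventually_ge_atTop (g' R / (1 - θ))] with r hr hkg
  rw [div_le_iff₀ (sub_pos.2 hθ)] at hkg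
  have hadd : g' r ≤ k r * g r + g' R :=
    hR.deriv_le_mul_add (hk.mono (Ici_subset_Ici.2 hbR)) hkR hr
  have hg'r : 0 < g' r := hR.deriv_pos hr
  rcases le_total (g' r) (k r * g r) with hle | hge
  · exact (mul_le_of_le_one_left hg'r.le hθ.le).trans hle
  · nlinarith [mul_le_mul_of_nonneg_right hge (sub_pos.2 hθ).le]

lemma eventually_lt_mul_div_rpow (h : IsGrowingSolution k g g' a) (hm : 0 < m)
    (hk : MonotoneOn k (Ici b)) (hk_top : Tendsto k atTop atTop)
    (hI : ∀ r ∈ Ioi a, HasDerivAt I (g r ^ m) r) (hI_pos : ∀ r ∈ Ioi a, 0 < I r)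
    (hc : c < 1 / m) : ∀ᶠ r in atTop, c < k r * I r / g r ^ m := by
  obtain ⟨d, hcd, hdm⟩ := exists_between hc
  obtain ⟨R, hR⟩ := ((eventually_gt_atTop a).and ((eventually_ge_atTop b).and
    (h.eventually_mul_deriv_le hk hk_top ((lt_div_iff₀ hm).1 hdm)))).exists_forall_of_atTop
  have hlim : Tendsto (fun r => d * (1 - g R ^ m / g r ^ m)) atTop (nhds d) := by
    simpa using ((((tendsto_rpow_atTop hm).comp h.tendsto_atTop).const_div_atTop
      (g R ^ m)).const_sub 1).const_mul d
  filter_upwards [eventually_ge_atTop R, hk_top.eventually_ge_atTop 0,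
    hlim.eventually (lt_mem_nhds hcd)] with r hr hkr hcr
  have hpos : ∀ t ∈ Icc R r, 0 < g t := fun t ht => h.pos (hR t ht.1).1
  have hcompare : d * (g r ^ m - g R ^ m) ≤ k r * (I r - I R) := by
    refine mul_rpow_sub_rpow_le_mul_sub hr
      (fun t ht =>
        ((h.mono (hR R le_rfl).1.le).hasDerivWithinAt t ht.1).mono Icc_subset_Ici_self)
      (fun t ht => (hI t (hR t ht.1).1).hasDerivWithinAt) hpos fun t ht => ?_
    exact (hR t ht.1).2.2.trans (mul_le_mul_of_nonneg_right
      (hk (hR t ht.1).2.1 (hR r hr).2.1 ht.2) (hpos t ht).le)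
  have hgm : 0 < g r ^ m := Real.rpow_pos_of_pos (hpos r ⟨hr, le_rfl⟩) m
  have hIR : 0 ≤ k r * I R := mul_nonneg hkr (hI_pos R (hR R le_rfl).1).le
  calc c < d * (1 - g R ^ m / g r ^ m) := hcr
    _ = d * (g r ^ m - g R ^ m) / g r ^ m := by field_simp
    _ ≤ k r * I r / g r ^ m := by exact div_le_div_of_nonneg_right (by linarith) hgm.le

lemma hasDerivWithinAt_deriv_div_self (h : IsGrowingSolution k g g' a) (hr : a ≤ r)
    (hgr : g r ≠ 0) :
    HasDerivWithinAt (fun t => g' t / g t) (k r ^ 2 - (g' r / g r) ^ 2) (Ici a) r := by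
  refine ((h.hasDerivWithinAt_deriv r hr).div (h.hasDerivWithinAt r hr) hgr).congr_deriv ?_
  field_simp

lemma frequently_mul_div_rpow_le (h : IsGrowingSolution k g g' a) (hm : 0 < m)
    (hI : ∀ r ∈ Ioi a, HasDerivAt I (g r ^ m) r) (hI_pos : ∀ r ∈ Ioi a, 0 < I r) :
    ∃ᶠ r in atTop, k r * I r / g r ^ m ≤ 3 / m := by
  refine frequently_atTop.2 fun R => ?_
  set b := max R (a + 1)
  have hab : a < b := (lt_add_one a).trans_le (le_max_right _ _)
  have hb := h.mono hab.le
  have hpos : ∀ t ∈ Ici b, 0 < g t := fun t ht => h.pos (hab.trans_le ht)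
  have hgm : ∀ t ∈ Ici b, 0 < g t ^ m := fun t ht => Real.rpow_pos_of_pos (hpos t ht) m
  have hI0 : ∀ t ∈ Ici b, 0 < I t := fun t ht => hI_pos t (hab.trans_le ht)
  have hv : ∀ t ∈ Ici b, HasDerivWithinAt (fun t => g t ^ m / I t)
      (g t ^ m / I t * (m * (g' t / g t) - g t ^ m / I t)) (Ici b) t := by
    intro t ht
    have hgt := hpos t ht
    have hIt := hI0 t ht
    refine (((hb.hasDerivWithinAt t ht).rpow_const (p := m) (Or.inl hgt.ne')).div
      (hI t (hab.trans_le ht)).hasDerivWithinAt hIt.ne').congr_deriv ?_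
    rw [Real.rpow_sub_one hgt.ne']
    field_simp
  obtain ⟨t, ht, hkt⟩ := exists_le_mul_of_riccati_system hm
    (fun t ht => hb.hasDerivWithinAt_deriv_div_self ht (hpos t ht).ne') hv
    (fun t ht => div_pos (hb.deriv_pos ht) (hpos t ht)) (fun t ht => div_pos (hgm t ht) (hI0 t ht))
  refine ⟨t, (le_max_left _ _).trans ht, ?_⟩
  rwa [div_le_iff₀ (hgm t ht), ← le_div_iff₀ (hI0 t ht), mul_div_assoc]

end IsGrowingSolution

theorem stmt2_general {m : ℝ} (hm : 0 < m) {k g g' : ℝ → ℝ} {a b : ℝ}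
    (hk_mono : MonotoneOn k (Ici b)) (hk_infty : Tendsto k atTop atTop)
    (hg : IsGrowingSolution k g g' a) :
    1 / m ≤ liminf (fun r => k r * (∫ t in a..r, g t ^ m) / g r ^ m) atTop := by
  have hgm : ContinuousOn (fun t => g t ^ m) (Ici a) :=
    hg.continuousOn.rpow_const fun _ _ => Or.inr hm.le
  have hI : ∀ r ∈ Ioi a, HasDerivAt (fun r => ∫ t in a..r, g t ^ m) (g r ^ m) r := fun r hr =>
    hasDerivAt_integral_of_continuousOn_Ici hgm hr
  have hI_pos : ∀ r ∈ Ioi a, 0 < ∫ t in a..r, g t ^ m := fun r hr =>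
    intervalIntegral_pos_of_pos_on
      ((hgm.mono Icc_subset_Ici_self).intervalIntegrable_of_Icc (le_of_lt hr))
      (fun t ht => Real.rpow_pos_of_pos (hg.pos ht.1) m) hr
  exact le_of_forall_lt_imp_le_of_dense fun c hc =>
    le_liminf_of_le (IsCoboundedUnder.of_frequently_le (hg.frequently_mul_div_rpow_le hm hI hI_pos))
      ((hg.eventually_lt_mul_div_rpow hm hk_mono hk_infty hI hI_pos hc).mono fun _ => le_of_lt)

/-- Let `m ≥ 1` be a real number, `k : [0,∞) → (0,∞)` continuous,
nondecreasing, `k(r) → +∞`, and let `g ∈ C²([0,∞))` solve `g'' = k² g`, `g(0)=0`,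
`g'(0)=1`.  Then `liminf_{r→∞} k(r) (∫₀^r g^m) / g(r)^m ≥ 1/m`. -/
theorem stmt2
    (m : ℝ) (hm : 1 ≤ m)
    (k : ℝ → ℝ)
    (hk_cont : ContinuousOn k (Set.Ici 0))
    (hk_pos : ∀ r : ℝ, 0 ≤ r → 0 < k r)
    (hk_mono : MonotoneOn k (Set.Ici 0))
    (hk_infty : Filter.Tendsto k Filter.atTop Filter.atTop)
    (g g' g'' : ℝ → ℝ)
    (hg_deriv : ∀ r : ℝ, 0 ≤ r → HasDerivWithinAt g (g' r) (Set.Ici 0) r)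
    (hg'_deriv : ∀ r : ℝ, 0 ≤ r → HasDerivWithinAt g' (g'' r) (Set.Ici 0) r)
    (hg''_cont : ContinuousOn g'' (Set.Ici 0))
    (hODE : ∀ r : ℝ, 0 ≤ r → g'' r = (k r) ^ 2 * g r)
    (hg0 : g 0 = 0) (hg'0 : g' 0 = 1) :
    1 / m ≤
      Filter.liminf (fun r : ℝ => k r * (∫ t in (0:ℝ)..r, g t ^ m) / g r ^ m)
        Filter.atTop :=
  stmt2_general (by linarith) hk_mono hk_infty
    ⟨hg_deriv, fun r hr => hODE r hr ▸ hg'_deriv r hr, hg0.ge, hg'0 ▸ one_pos⟩
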